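/- arXiv:1907.07801 — 3 statements merged into one kernel-verified Lean document; each statement's English description precedes it below -/
import Mathlib

section
/- Take n* = 3, so N = {0,1,2}, and let U = {{0,1}, {1,2}, {0,1,2}} ∈ 𝒬. Then for every list 𝔸 = (A₁, …, A_r) of subsets of N one has T(𝔸) ≠ U. Indeed, for any list 𝔸, if {0,1} ∈ T(𝔸) and {1,2} ∈ T(𝔸) and {1} ∉ T(𝔸), then {0,2} ∈ T(𝔸). Equivalently, U does not lie in the submonoid of (𝒬, *) generated by the elements vA for A ⊆ N. -/
def Angle {n : ℕ} (A B : Set (Fin n)) : Prop := ∀ a ∈ A, ∀ b ∈ B, a ≤ b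

def QStar {n : ℕ} (U V : Set (Set (Fin n))) : Set (Set (Fin n)) :=
  {C | ∃ A ∈ U, ∃ B ∈ V, Angle A B ∧ C = A ∪ B}

def USet {n : ℕ} (A : Set (Fin n)) : Set (Set (Fin n)) := {B | A ⊆ B}

def VSet {n : ℕ} (A : Set (Fin n)) : Set (Set (Fin n)) := {B | (B ∩ A).Nonempty}

def IsThread {n : ℕ} (𝔸 : List (Set (Fin n))) (t : List (Fin n)) : Prop :=
  List.Forall₂ (fun a A => a ∈ A) t 𝔸 ∧ List.Chain' (· ≤ ·) t

def ThreadSets {n : ℕ} (𝔸 : List (Set (Fin n))) : Set (Set (Fin n)) :=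
  {S | ∃ t : List (Fin n), IsThread 𝔸 t ∧ ∀ a ∈ t, a ∈ S}

/-!
`T` turns concatenation of lists into `*`, so the submonoid generated by the `vA` consists exactly
of the sets `T(𝔸)`. Now let `m ∈ N`, let `S₀` lie strictly below `m` and `S₁` strictly above, and
take one thread of `𝔸` in `S₀ ∪ {m}` and another in `S₁ ∪ {m}`. The first is `p` entries below `m`
followed by copies of `m`; the second is `q` copies of `m` followed by entries above `m`. If `p < q`
then every position admits `m`, so `m, …, m` is a thread. If `q ≤ p` then the first `p` entries of
the first thread followed by the remaining entries of the second form a thread in `S₀ ∪ S₁`.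
-/

section

open Set

variable {n : ℕ} {A S : Set (Fin n)} {𝔸 𝔹 : List (Set (Fin n))} {s t : List (Fin n)}

theorem isThread_iff_pairwise :
    IsThread 𝔸 t ↔ List.Forall₂ (fun a A => a ∈ A) t 𝔸 ∧ t.Pairwise (· ≤ ·) :=
  and_congr_right fun _ => List.isChain_iff_pairwise

theorem IsThread.append (hs : IsThread 𝔸 s) (ht : IsThread 𝔹 t)
    (hst : ∀ a ∈ s, ∀ b ∈ t, a ≤ b) : IsThread (𝔸 ++ 𝔹) (s ++ t) := by
  rw [isThread_iff_pairwise] at hs ht ⊢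
  exact ⟨List.rel_append hs.1 ht.1, List.pairwise_append.2 ⟨hs.2, ht.2, hst⟩⟩

theorem IsThread.exists_eq_append (ht : IsThread (𝔸 ++ 𝔹) t) :
    ∃ u v, t = u ++ v ∧ IsThread 𝔸 u ∧ IsThread 𝔹 v ∧ ∀ a ∈ u, ∀ b ∈ v, a ≤ b := by
  obtain ⟨hmem, hle⟩ := isThread_iff_pairwise.1 ht
  have htake := List.forall₂_take_append t 𝔸 𝔹 hmem
  have hdrop := List.forall₂_drop_append t 𝔸 𝔹 hmem
  rw [← List.take_append_drop 𝔸.length t, List.pairwise_append] at hle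
  obtain ⟨hle_take, hle_drop, hle_take_drop⟩ := hle
  exact ⟨_, _, (List.take_append_drop 𝔸.length t).symm,
    isThread_iff_pairwise.2 ⟨htake, hle_take⟩, isThread_iff_pairwise.2 ⟨hdrop, hle_drop⟩,
    hle_take_drop⟩

theorem isUpperSet_threadSets (𝔸 : List (Set (Fin n))) : IsUpperSet (ThreadSets 𝔸) :=
  fun _ _ hST ⟨t, ht, htS⟩ => ⟨t, ht, fun a ha => hST (htS a ha)⟩

theorem threadSets_nil : ThreadSets ([] : List (Set (Fin n))) = USet ∅ := by
  ext S
  simp [ThreadSets, isThread_iff_pairwise, USet]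

theorem threadSets_singleton (A : Set (Fin n)) : ThreadSets [A] = VSet A := by
  ext S
  simp [ThreadSets, isThread_iff_pairwise, VSet, List.forall₂_cons_right_iff, Set.Nonempty,
    and_comm]

theorem exists_angle_union_eq (hs : ∀ a ∈ s, a ∈ S) (ht : ∀ b ∈ t, b ∈ S)
    (hst : ∀ a ∈ s, ∀ b ∈ t, a ≤ b) :
    ∃ P Q, (∀ a ∈ s, a ∈ P) ∧ (∀ b ∈ t, b ∈ Q) ∧ Angle P Q ∧ S = P ∪ Q := by
  let P : Set (Fin n) := {x ∈ S | ∀ b ∈ t, x ≤ b}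
  let Q : Set (Fin n) := {y ∈ S | ∀ x ∈ P, x ≤ y}
  refine ⟨P, Q, fun a ha => ⟨hs a ha, hst a ha⟩, fun b hb => ⟨ht b hb, fun x hx => hx.2 b hb⟩,
    fun x hx y hy => hy.2 x hx, subset_antisymm (fun y hy => ?_) ?_⟩
  · by_cases hyP : ∀ b ∈ t, y ≤ b
    · exact Or.inl ⟨hy, hyP⟩
    · push Not at hyP
      obtain ⟨b, hb, hby⟩ := hyP
      exact Or.inr ⟨hy, fun x hx => (hx.2 b hb).trans hby.le⟩
  · exact union_subset (sep_subset _ _) (sep_subset _ _)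

theorem threadSets_append (𝔸 𝔹 : List (Set (Fin n))) :
    ThreadSets (𝔸 ++ 𝔹) = QStar (ThreadSets 𝔸) (ThreadSets 𝔹) := by
  ext S
  constructor
  · rintro ⟨_, ht, htS⟩
    obtain ⟨u, v, rfl, hu, hv, huv⟩ := ht.exists_eq_append
    obtain ⟨huS, hvS⟩ := List.forall_mem_append.1 htS
    obtain ⟨P, Q, huP, hvQ, hPQ, hS⟩ := exists_angle_union_eq huS hvS huv
    exact ⟨P, ⟨u, hu, huP⟩, Q, ⟨v, hv, hvQ⟩, hPQ, hS⟩
  · rintro ⟨P, ⟨u, hu, huP⟩, Q, ⟨v, hv, hvQ⟩, hPQ, rfl⟩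
    exact ⟨u ++ v, hu.append hv fun a ha b hb => hPQ a (huP a ha) b (hvQ b hb),
      List.forall_mem_append.2 ⟨fun a ha => Or.inl (huP a ha), fun b hb => Or.inr (hvQ b hb)⟩⟩

theorem foldl_qStar_map_vSet (𝔸 : List (Set (Fin n))) :
    List.foldl QStar (USet ∅) (𝔸.map VSet) = ThreadSets 𝔸 := by
  induction 𝔸 using List.reverseRecOn with
  | nil => exact threadSets_nil.symm
  | append_singleton 𝔸 A ih =>
    rw [List.map_append, List.foldl_append, ih, threadSets_append, threadSets_singleton]
    rfl

theorem mem_threadSets_cons :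
    S ∈ ThreadSets (A :: 𝔸) ↔ ∃ a ∈ A, a ∈ S ∧ S ∩ Ici a ∈ ThreadSets 𝔸 := by
  rw [← List.singleton_append, threadSets_append, threadSets_singleton]
  constructor
  · rintro ⟨P, ⟨a, haP, haA⟩, Q, hQ, hPQ, rfl⟩
    exact ⟨a, haA, Or.inl haP,
      isUpperSet_threadSets 𝔸 (fun b hb => ⟨Or.inr hb, hPQ a haP b hb⟩) hQ⟩
  · rintro ⟨a, haA, haS, hS⟩
    refine ⟨S ∩ Iic a, ⟨a, ⟨haS, self_mem_Iic⟩, haA⟩, S ∩ Ici a, hS,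
      fun x hx y hy => hx.2.trans hy.2, ?_⟩
    rw [← inter_union_distrib_left, Iic_union_Ici, inter_univ]

theorem singleton_mem_threadSets_or_union_mem_threadSets {m : Fin n} {S₀ S₁ : Set (Fin n)}
    (hS₀ : S₀ ⊆ Iio m) (hS₁ : S₁ ⊆ Ioi m)
    (h₀ : insert m S₀ ∈ ThreadSets 𝔸) (h₁ : insert m S₁ ∈ ThreadSets 𝔸) :
    {m} ∈ ThreadSets 𝔸 ∨ S₀ ∪ S₁ ∈ ThreadSets 𝔸 := by
  induction 𝔸 generalizing S₀ with
  | nil => exact Or.inl (threadSets_nil ▸ empty_subset _)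
  | cons A 𝔸 ih =>
    have mono := isUpperSet_threadSets 𝔸
    simp only [mem_threadSets_cons] at h₀ h₁ ⊢
    obtain ⟨a, haA, rfl | ha, hta⟩ := h₀
    · have htail : insert a S₀ ∩ Ici a ⊆ {a} ∩ Ici a := by grind
      exact Or.inl ⟨a, haA, rfl, mono htail hta⟩
    obtain ⟨b, hbA, rfl | hb, htb⟩ := h₁
    · have hab : a < b := hS₀ ha
      -- Cutting `S₀` down to `Ici a` keeps `a` below the thread found in the union.
      have h₀_tail : insert b (S₀ ∩ Ici a) ∈ ThreadSets 𝔸 := mono (by grind) hta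
      have h₁_tail : insert b S₁ ∈ ThreadSets 𝔸 := mono inter_subset_left htb
      obtain hw | hw := ih (inter_subset_left.trans hS₀) h₀_tail h₁_tail
      · exact Or.inl ⟨b, hbA, rfl, mono (subset_inter subset_rfl (by simp)) hw⟩
      · have hunion : S₀ ∩ Ici a ∪ S₁ ⊆ (S₀ ∪ S₁) ∩ Ici a := by grind
        exact Or.inr ⟨a, haA, Or.inl ha, mono hunion hw⟩
    · have htail : insert m S₁ ∩ Ici b ⊆ (S₀ ∪ S₁) ∩ Ici b := by grind
      exact Or.inr ⟨b, hbA, Or.inr hb, mono htail htb⟩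

theorem stmt8_general {m : Fin n} {S₀ S₁ : Set (Fin n)} (hS₀ : S₀ ⊆ Iio m) (hS₁ : S₁ ⊆ Ioi m)
    {U : Set (Set (Fin n))} (h₀ : insert m S₀ ∈ U) (h₁ : insert m S₁ ∈ U) (hm : {m} ∉ U)
    (hU : S₀ ∪ S₁ ∉ U) :
    (∀ 𝔸 : List (Set (Fin n)), ThreadSets 𝔸 ≠ U) ∧
      (∀ 𝔸 : List (Set (Fin n)), insert m S₀ ∈ ThreadSets 𝔸 → insert m S₁ ∈ ThreadSets 𝔸 →
        {m} ∉ ThreadSets 𝔸 → S₀ ∪ S₁ ∈ ThreadSets 𝔸) ∧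
      ¬ ∃ l : List (Set (Fin n)), List.foldl QStar (USet ∅) (l.map VSet) = U := by
  have hne (𝔸 : List (Set (Fin n))) : ThreadSets 𝔸 ≠ U := by
    rintro rfl
    exact (singleton_mem_threadSets_or_union_mem_threadSets hS₀ hS₁ h₀ h₁).elim hm hU
  refine ⟨hne, fun 𝔸 h₀ h₁ => (singleton_mem_threadSets_or_union_mem_threadSets hS₀ hS₁
    h₀ h₁).resolve_left, ?_⟩
  rintro ⟨l, hl⟩
  exact hne l (foldl_qStar_map_vSet l ▸ hl)

end

theorem stmt8 :
    let U : Set (Set (Fin 3)) :=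
      {({0, 1} : Set (Fin 3)), ({1, 2} : Set (Fin 3)), ({0, 1, 2} : Set (Fin 3))}
    (∀ 𝔸 : List (Set (Fin 3)), ThreadSets 𝔸 ≠ U) ∧
      (∀ 𝔸 : List (Set (Fin 3)),
        ({0, 1} : Set (Fin 3)) ∈ ThreadSets 𝔸 →
        ({1, 2} : Set (Fin 3)) ∈ ThreadSets 𝔸 →
        ({1} : Set (Fin 3)) ∉ ThreadSets 𝔸 →
        ({0, 2} : Set (Fin 3)) ∈ ThreadSets 𝔸) ∧
      ¬ ∃ l : List (Set (Fin 3)),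
        List.foldl QStar (USet (∅ : Set (Fin 3))) (l.map VSet) = U := by
  intro U
  rw [Set.pair_comm 0 1]
  exact stmt8_general (m := 1) (S₀ := {0}) (S₁ := {2}) (by simp) (by simp)
    (by simp [U, Set.pair_comm]) (by simp [U]) (by simp [U, Set.ext_iff, Fin.forall_fin_succ])
    (by simp [U, Set.ext_iff, Fin.forall_fin_succ])
end

section
/- For subsets A, B ⊆ N one has uA * uB = u(A ∪ B) if A ∠ B, and uA * uB = ∅ otherwise. -/
/-!
If `uA * uB` contains some `A' ∪ B'`, then `A' ∠ B'` restricts to `A ∠ B`. Conversely, if `A ∠ B`,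
then every `C ⊇ A ∪ B` is cut in two by the lower bounds of `B` and the upper bounds of those: in a
linear order these two sets cover everything, and they contain `A` and `B` respectively.
-/

section

open Set

variable {α : Type*}

/-- The product `U * V` of two families of subsets of a preorder: all unions `A ∪ B` with `A ∈ U`,
`B ∈ V` and `A ∠ B`, the latter relation being expressed as `A ⊆ lowerBounds B`. -/
def orderedUnions [Preorder α] (U V : Set (Set α)) : Set (Set α) :=
  {C | ∃ A ∈ U, ∃ B ∈ V, A ⊆ lowerBounds B ∧ C = A ∪ B}

theorem orderedUnions_Ici_subset [Preorder α] (A B : Set α) :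
    orderedUnions (Ici A) (Ici B) ⊆ Ici (A ∪ B) := by
  rintro _ ⟨A', hA, B', hB, -, rfl⟩
  exact union_subset_union hA hB

theorem subset_lowerBounds_of_orderedUnions_Ici_nonempty [Preorder α] {A B : Set α}
    (h : (orderedUnions (Ici A) (Ici B)).Nonempty) : A ⊆ lowerBounds B := by
  obtain ⟨_, A', hA, B', hB, hAB, -⟩ := h
  calc
    A ⊆ A' := hA
    _ ⊆ lowerBounds B' := hAB
    _ ⊆ lowerBounds B := lowerBounds_mono_set hB

theorem lowerBounds_union_upperBounds_lowerBounds [LinearOrder α] (B : Set α) :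
    lowerBounds B ∪ upperBounds (lowerBounds B) = univ := by
  refine eq_univ_of_forall fun c ↦ or_iff_not_imp_left.2 fun hc ↦ ?_
  obtain ⟨b, hb, hbc⟩ : ∃ b ∈ B, b < c := by simpa [mem_lowerBounds] using hc
  exact fun a ha ↦ (ha hb).trans hbc.le

theorem Ici_union_subset_orderedUnions [LinearOrder α] {A B : Set α} (h : A ⊆ lowerBounds B) :
    Ici (A ∪ B) ⊆ orderedUnions (Ici A) (Ici B) := by
  intro C hC
  obtain ⟨hA, hB⟩ := union_subset_iff.1 hC
  refine ⟨C ∩ lowerBounds B, subset_inter hA h,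
    C ∩ upperBounds (lowerBounds B), subset_inter hB (subset_upperBounds_lowerBounds B),
    fun a ha b hb ↦ hb.2 ha.2, ?_⟩
  rw [← inter_union_distrib_left, lowerBounds_union_upperBounds_lowerBounds, inter_univ]

theorem stmt9_general [LinearOrder α] (A B : Set α) :
    (A ⊆ lowerBounds B → orderedUnions (Ici A) (Ici B) = Ici (A ∪ B)) ∧
      (¬ A ⊆ lowerBounds B → orderedUnions (Ici A) (Ici B) = ∅) :=
  ⟨fun h ↦ (orderedUnions_Ici_subset A B).antisymm (Ici_union_subset_orderedUnions h),
    fun h ↦ not_nonempty_iff_eq_empty.1 (mt subset_lowerBounds_of_orderedUnions_Ici_nonempty h)⟩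

end

theorem stmt9 {n : ℕ} (hn : 1 ≤ n) (A B : Set (Fin n)) :
    (Angle A B → QStar (USet A) (USet B) = USet (A ∪ B)) ∧
      (¬ Angle A B → QStar (USet A) (USet B) = ∅) :=
  stmt9_general A B
end

section
/- Let U, V be upward-closed subsets of 𝒫 and let C ∈ U*V. Then the poset C/σ = {(A,B) : A ∈ U, B ∈ V, A ∠ B, C ⊆ A ∪ B}, ordered componentwise by inclusion, is strongly contractible. (This says the map σ(A,B) = A ∪ B from U ⊛ V = {(A,B) ∈ U × V : A ∠ B} to U*V is homotopy final.) -/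
def UpClosed {n : ℕ} (U : Set (Set (Fin n))) : Prop :=
  ∀ ⦃A B : Set (Fin n)⦄, A ∈ U → A ⊆ B → B ∈ U

/-- A poset is strongly contractible if its identity is related to a constant map by the
reflexive-transitive closure of pointwise comparability of monotone self-maps. -/
def StronglyContractible (P : Type*) [Preorder P] : Prop :=
  ∃ p : P, Relation.ReflTransGen (fun f g : P →o P => f ≤ g ∨ g ≤ f)
    OrderHom.id ((OrderHom.const P) p)

/-!
Truncate a pair `(A, B)` along a lower set `S ∈ U` and a set `T` with `Sᶜ ⊆ T ⊆ upperBounds S`: the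
pair `(↓A ∩ S, ↑B ∪ T)` lies in `C/σ` again, because `↓A` and `S` are comparable, so that their
intersection is one of them. Truncation is monotone in `(S, T)`, and along `(univ, ∅)` it dominates
the identity. If `S' ⋖ S` is a covering of lower sets, at most one element of `S` is missing from
`S'`, hence `(S, Sᶜ) ≤ (S, upperBounds S) ≥ (S', S'ᶜ)`. These zigzags descend from `univ` to the
least lower set `L` in `U`, and truncation along `(L, upperBounds L)` is constant.
-/

open Relation (ReflTransGen)

section Zigzag

variable {P Q : Type*} [Preorder P] [Preorder Q] {x y : P}

/-- Two elements of a preorder are zigzag connected if they are joined by a finite chain of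
comparabilities. In `P →o P` this is strong homotopy of monotone maps. -/
abbrev ZigzagConnected (x y : P) : Prop :=
  ReflTransGen (fun x y : P => x ≤ y ∨ y ≤ x) x y

theorem ZigzagConnected.of_le (h : x ≤ y) : ZigzagConnected x y :=
  .single (.inl h)

theorem ZigzagConnected.of_ge (h : y ≤ x) : ZigzagConnected x y :=
  .single (.inr h)

theorem ZigzagConnected.map {f : P → Q} (hf : Monotone f) (h : ZigzagConnected x y) :
    ZigzagConnected (f x) (f y) :=
  ReflTransGen.lift f (fun _ _ => Or.imp (@hf _ _) (@hf _ _)) _ _ h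

end Zigzag

section LowerSets

variable {α : Type*}

theorem lowerClosure_le_upperClosure [Preorder α] {A B : Set α} (h : ∀ a ∈ A, ∀ b ∈ B, a ≤ b) :
    ∀ a ∈ lowerClosure A, ∀ b ∈ upperClosure B, a ≤ b := by
  rintro a ⟨a', ha', ha⟩ b ⟨b', hb', hb⟩
  exact ha.trans ((h a' ha' b' hb').trans hb)

variable [LinearOrder α]

theorem coe_inf_lowerSet_mem {U : Set (Set α)} {S T : LowerSet α} (hS : (S : Set α) ∈ U)
    (hT : (T : Set α) ∈ U) : ((S ⊓ T : LowerSet α) : Set α) ∈ U := by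
  rcases min_choice S T with h | h <;> rwa [h]

theorem compl_subset_upperBounds (S : LowerSet α) : (S : Set α)ᶜ ⊆ upperBounds S :=
  fun _ hx _ hs => le_of_not_ge fun hxs => hx (S.lower hxs hs)

theorem compl_subset_upperBounds_of_covBy {S S' : LowerSet α} (h : S' ⋖ S) :
    (S' : Set α)ᶜ ⊆ upperBounds S := by
  intro x hx y hy
  by_contra! hxy
  have hS'x : S' < LowerSet.Iic x :=
    lt_of_le_of_ne (fun _ hs => compl_subset_upperBounds S' hx hs)
      (fun heq => hx (heq ▸ le_refl x))
  have hxS : LowerSet.Iic x < S :=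
    lt_of_le_of_ne (LowerSet.Iic_le.2 (S.lower hxy.le hy))
      (fun heq => hxy.not_ge (heq ▸ hy : y ∈ LowerSet.Iic x))
  exact h.2 hS'x hxS

theorem exists_isLeast_lowerSet_mem [Finite α] {U : Set (Set α)} (hU : IsUpperSet U)
    (hne : U.Nonempty) : ∃ L : LowerSet α, IsLeast {S : LowerSet α | (S : Set α) ∈ U} L := by
  obtain ⟨A, hA⟩ := hne
  obtain ⟨L, hL⟩ := (Set.toFinite {S : LowerSet α | (S : Set α) ∈ U}).exists_minimal
    ⟨lowerClosure A, hU subset_lowerClosure hA⟩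
  exact ⟨L, minimal_iff_isLeast.1 hL⟩

end LowerSets

section Cuts

/-- The cuts `(S, T)` along which pairs are truncated: `S` is a lower set in `U`, and `T` consists
of upper bounds of `S` and contains everything outside `S`. So `S` and `T` cover `α`, and any
element common to both is a greatest element of `S`. -/
abbrev Cut {α : Type*} [Preorder α] (U : Set (Set α)) : Type _ :=
  {c : LowerSet α × Set α //
    (c.1 : Set α) ∈ U ∧ (c.1 : Set α)ᶜ ⊆ c.2 ∧ c.2 ⊆ upperBounds (c.1 : Set α)}

variable {α : Type*} [LinearOrder α] {U : Set (Set α)}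

/-- The least cut with first component `S`. -/
def complCut (S : LowerSet α) (hS : (S : Set α) ∈ U) : Cut U :=
  ⟨(S, (S : Set α)ᶜ), hS, subset_rfl, compl_subset_upperBounds S⟩

/-- The greatest cut with first component `S`. -/
def boundsCut (S : LowerSet α) (hS : (S : Set α) ∈ U) : Cut U :=
  ⟨(S, upperBounds (S : Set α)), hS, compl_subset_upperBounds S, subset_rfl⟩

theorem complCut_le_boundsCut (S : LowerSet α) (hS : (S : Set α) ∈ U) :
    complCut S hS ≤ boundsCut S hS :=
  ⟨le_rfl, compl_subset_upperBounds S⟩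

theorem complCut_le_boundsCut_of_covBy {S S' : LowerSet α} (h : S' ⋖ S) (hS : (S : Set α) ∈ U)
    (hS' : (S' : Set α) ∈ U) : complCut S' hS' ≤ boundsCut S hS :=
  ⟨h.le, compl_subset_upperBounds_of_covBy h⟩

theorem zigzagConnected_complCut [Finite α] (hU : IsUpperSet U) {L S : LowerSet α} (hLS : L ≤ S)
    (hL : (L : Set α) ∈ U) : ZigzagConnected (complCut S (hU hLS hL)) (complCut L hL) := by
  classical
  have := Fintype.ofFinite (LowerSet α)
  have := Fintype.toLocallyFiniteOrder (α := LowerSet α)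
  induction le_iff_reflTransGen_covBy.1 hLS with
  | refl => exact .refl
  | @tail S' S hchain hcov ih =>
    have hLS' : L ≤ S' := le_iff_reflTransGen_covBy.2 hchain
    have hS : (S : Set α) ∈ U := hU hLS hL
    have hS' : (S' : Set α) ∈ U := hU hLS' hL
    calc
      ZigzagConnected (complCut S hS) (boundsCut S hS) := .of_le (complCut_le_boundsCut S hS)
      ZigzagConnected _ (complCut S' hS') := .of_ge (complCut_le_boundsCut_of_covBy hcov hS hS')
      ZigzagConnected _ (complCut L hL) := ih hLS'

end Cuts

section CommaPoset

/-- The comma poset `C/σ` over an arbitrary preorder. The condition `A ∠ B` is spelled out since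
`Angle` is only available for `Fin n`. -/
abbrev CommaPoset {α : Type*} [Preorder α] (U V : Set (Set α)) (C : Set α) : Type _ :=
  {p : Set α × Set α //
    p.1 ∈ U ∧ p.2 ∈ V ∧ (∀ a ∈ p.1, ∀ b ∈ p.2, a ≤ b) ∧ C ⊆ p.1 ∪ p.2}

variable {α : Type*} [LinearOrder α] {U V : Set (Set α)} {C : Set α}

theorem truncation_mem_commaPoset (hU : IsUpperSet U) (hV : IsUpperSet V) (c : Cut U)
    (x : CommaPoset U V C) :
    ((lowerClosure x.1.1 ⊓ c.1.1 : LowerSet α) : Set α) ∈ U ∧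
      (upperClosure x.1.2 : Set α) ∪ c.1.2 ∈ V ∧
      (∀ a ∈ lowerClosure x.1.1 ⊓ c.1.1, ∀ b ∈ (upperClosure x.1.2 : Set α) ∪ c.1.2, a ≤ b) ∧
      C ⊆ ((lowerClosure x.1.1 ⊓ c.1.1 : LowerSet α) : Set α) ∪
        ((upperClosure x.1.2 : Set α) ∪ c.1.2) := by
  obtain ⟨⟨A, B⟩, hA, hB, hAB, hC⟩ := x
  obtain ⟨⟨S, T⟩, hS, hST, hTS⟩ := c
  refine ⟨coe_inf_lowerSet_mem (hU subset_lowerClosure hA) hS,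
    hV (subset_upperClosure.trans Set.subset_union_left) hB, ?_, fun y hy => ?_⟩
  · rintro a ⟨haA, haS⟩ b (hbB | hbT)
    · exact lowerClosure_le_upperClosure hAB a haA b hbB
    · exact hTS hbT haS
  · rcases hC hy with hyA | hyB
    · by_cases hyS : y ∈ S
      · exact .inl ⟨subset_lowerClosure hyA, hyS⟩
      · exact .inr (.inr (hST hyS))
    · exact .inr (.inl (subset_upperClosure hyB))

/-- Truncation `(A, B) ↦ (↓A ∩ S, ↑B ∪ T)` along a cut `(S, T)`, as a monotone self-map of the
comma poset. -/
def truncate (hU : IsUpperSet U) (hV : IsUpperSet V) (c : Cut U) :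
    CommaPoset U V C →o CommaPoset U V C where
  toFun x := ⟨(((lowerClosure x.1.1 ⊓ c.1.1 : LowerSet α) : Set α),
    (upperClosure x.1.2 : Set α) ∪ c.1.2), truncation_mem_commaPoset hU hV c x⟩
  monotone' _ _ hxy :=
    ⟨inf_le_inf_right c.1.1 (lowerClosure_mono hxy.1),
      Set.union_subset_union_left c.1.2 (upperClosure_anti hxy.2)⟩

theorem truncate_mono (hU : IsUpperSet U) (hV : IsUpperSet V) :
    Monotone (truncate hU hV : Cut U → (CommaPoset U V C →o CommaPoset U V C)) :=
  fun _ _ hcd x =>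
    ⟨inf_le_inf_left (lowerClosure x.1.1) hcd.1, Set.union_subset_union_right _ hcd.2⟩

theorem id_le_truncate_complCut_top (hU : IsUpperSet U) (hV : IsUpperSet V)
    (htop : ((⊤ : LowerSet α) : Set α) ∈ U) :
    (OrderHom.id : CommaPoset U V C →o CommaPoset U V C) ≤ truncate hU hV (complCut ⊤ htop) :=
  fun _ => ⟨fun _ ha => ⟨subset_lowerClosure ha, trivial⟩,
    fun _ hb => .inl (subset_upperClosure hb)⟩

theorem coe_truncate_boundsCut_of_isLeast (hU : IsUpperSet U) (hV : IsUpperSet V) {L : LowerSet α}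
    (hL : IsLeast {S : LowerSet α | (S : Set α) ∈ U} L) (x : CommaPoset U V C) :
    (truncate hU hV (boundsCut L hL.1) x : Set α × Set α) = (↑L, upperBounds ↑L) := by
  obtain ⟨⟨A, B⟩, hA, -, hAB, -⟩ := x
  have hLA : L ≤ lowerClosure A := hL.2 (hU subset_lowerClosure hA)
  have hBL : (upperClosure B : Set α) ⊆ upperBounds L := fun b hb a ha =>
    lowerClosure_le_upperClosure hAB a (hLA ha) b hb
  exact Prod.ext (congrArg SetLike.coe (inf_eq_right.2 hLA)) (Set.union_eq_right.2 hBL)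

theorem stmt11_general [Finite α] (hU : IsUpperSet U) (hV : IsUpperSet V)
    (hne : Nonempty (CommaPoset U V C)) : StronglyContractible (CommaPoset U V C) := by
  obtain ⟨x₀⟩ := hne
  obtain ⟨L, hL⟩ := exists_isLeast_lowerSet_mem hU ⟨x₀.1.1, x₀.2.1⟩
  have htop : ((⊤ : LowerSet α) : Set α) ∈ U := hU (le_top (a := L)) hL.1
  have hconst : truncate hU hV (boundsCut L hL.1) =
      OrderHom.const (CommaPoset U V C) (truncate hU hV (boundsCut L hL.1) x₀) :=
    OrderHom.ext _ _ <| funext fun x => Subtype.ext <|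
      (coe_truncate_boundsCut_of_isLeast hU hV hL x).trans
        (coe_truncate_boundsCut_of_isLeast hU hV hL x₀).symm
  have hcuts : ZigzagConnected (complCut ⊤ htop) (boundsCut L hL.1) :=
    (zigzagConnected_complCut hU le_top hL.1).trans
      (ZigzagConnected.of_le (complCut_le_boundsCut L hL.1))
  refine ⟨truncate hU hV (boundsCut L hL.1) x₀, ?_⟩
  rw [← hconst]
  exact (ZigzagConnected.of_le (id_le_truncate_complCut_top hU hV htop)).trans
    (hcuts.map (truncate_mono hU hV))

end CommaPoset

theorem UpClosed.isUpperSet {n : ℕ} {U : Set (Set (Fin n))} (hU : UpClosed U) : IsUpperSet U :=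
  fun _ _ hAB hA => hU hA hAB

theorem nonempty_commaPoset_of_mem_qStar {n : ℕ} {U V : Set (Set (Fin n))} {C : Set (Fin n)}
    (hC : C ∈ QStar U V) : Nonempty (CommaPoset U V C) := by
  obtain ⟨A, hA, B, hB, hAB, rfl⟩ := hC
  exact ⟨⟨(A, B), hA, hB, hAB, subset_rfl⟩⟩

/-- The comma poset `C/σ` for `σ : U ⊛ V → U*V`, `σ(A,B) = A ∪ B`, is strongly
contractible; i.e. `σ` is homotopy final. -/
theorem stmt11 {n : ℕ} (hn : 1 ≤ n) (U V : Set (Set (Fin n)))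
    (hU : UpClosed U) (hV : UpClosed V) (C : Set (Fin n)) (hC : C ∈ QStar U V) :
    StronglyContractible
      {p : Set (Fin n) × Set (Fin n) //
        p.1 ∈ U ∧ p.2 ∈ V ∧ Angle p.1 p.2 ∧ C ⊆ p.1 ∪ p.2} :=
  stmt11_general hU.isUpperSet hV.isUpperSet (nonempty_commaPoset_of_mem_qStar hC)
end
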